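/- arXiv:2101.03033 — 4 statements merged into one kernel-verified Lean document; each statement's English description precedes it below -/
import Mathlib

section
/- An incomplete symmetric matrix A is Strong-Robinsonian if and only if A has a Robinsonian completion, i.e., there exists a complete symmetric matrix B agreeing with A on all non-missing entries of A such that B is Robinsonian. -/
/-!
The upper triangle of a matrix is a function on the nonempty intervals `[i, j]` ordered by
inclusion. Seen this way, a Robinson matrix is an antitone function and a Strong-Robinson incomplete
matrix is an antitone partial function. An antitone partial function with bounded values extends to
an antitone total one, by taking at each point the supremum of the values above it. Evaluating the
extension at the interval hull of `{i, j}` gives the completion.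
-/

/-- An incomplete matrix (entries in `Option ℝ`, `none` = missing) is symmetric. -/
def IsSymmetricOpt {n : ℕ} (A : Fin n → Fin n → Option ℝ) : Prop :=
  ∀ i j, A j i = A i j

/-- Incomplete Robinson: non-missing entries do not decrease along rows and
columns when moving toward the main diagonal. -/
def IsRobinsonOpt {n : ℕ} (A : Fin n → Fin n → Option ℝ) : Prop :=
  (∀ i k j : Fin n, i ≤ k → k ≤ j →
    ∀ x y : ℝ, A i j = some x → A i k = some y → x ≤ y) ∧
  (∀ i l j : Fin n, i ≤ l → l ≤ j →
    ∀ x y : ℝ, A i j = some x → A l j = some y → x ≤ y)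

/-- Incomplete Strong-Robinson: `a_{i,j} ≤ a_{k,l}` whenever
`i ≤ k ≤ l ≤ j` and both entries are non-missing. -/
def IsStrongRobinsonOpt {n : ℕ} (A : Fin n → Fin n → Option ℝ) : Prop :=
  ∀ i k l j : Fin n, i ≤ k → k ≤ l → l ≤ j →
    ∀ x y : ℝ, A i j = some x → A k l = some y → x ≤ y

/-- Incomplete Robinsonian: some simultaneous permutation of rows and columns is Robinson. -/
def IsRobinsonianOpt {n : ℕ} (A : Fin n → Fin n → Option ℝ) : Prop :=
  ∃ π : Equiv.Perm (Fin n), IsRobinsonOpt (fun i j => A (π i) (π j))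

/-- Incomplete Strong-Robinsonian. -/
def IsStrongRobinsonianOpt {n : ℕ} (A : Fin n → Fin n → Option ℝ) : Prop :=
  ∃ π : Equiv.Perm (Fin n), IsStrongRobinsonOpt (fun i j => A (π i) (π j))

/-- Complete Robinson matrix. -/
def IsRobinson {n : ℕ} (B : Fin n → Fin n → ℝ) : Prop :=
  (∀ i k j : Fin n, i ≤ k → k ≤ j → B i j ≤ B i k) ∧
  (∀ i l j : Fin n, i ≤ l → l ≤ j → B i j ≤ B l j)

/-- Complete Robinsonian matrix. -/
def IsRobinsonian {n : ℕ} (B : Fin n → Fin n → ℝ) : Prop :=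
  ∃ π : Equiv.Perm (Fin n), IsRobinson (fun i j => B (π i) (π j))

/-- `B` is a (symmetric) completion of the incomplete matrix `A`. -/
def IsCompletion {n : ℕ} (A : Fin n → Fin n → Option ℝ) (B : Fin n → Fin n → ℝ) : Prop :=
  (∀ i j, B j i = B i j) ∧ ∀ i j (x : ℝ), A i j = some x → B i j = x

/-- `w(A)`: the set of values appearing among the non-missing entries of `A`. -/
def valueSet {n : ℕ} (A : Fin n → Fin n → Option ℝ) : Set ℝ :=
  {x | ∃ i j, A i j = some x}

section PartialAntitone

variable {α β : Type*}

/-- A partial function, undefined where its value is `none`, is antitone on its domain. This is the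
order-theoretic form of the Strong-Robinson property. -/
def PartialAntitone [LE α] [LE β] (f : α → Option β) : Prop :=
  ∀ ⦃a b⦄, a ≤ b → ∀ ⦃x y⦄, f b = some x → f a = some y → x ≤ y

variable [Preorder α]

theorem PartialAntitone.of_antitone_extension [Preorder β] {f : α → Option β} {g : α → β}
    (hg : Antitone g) (hfg : ∀ a x, f a = some x → g a = x) : PartialAntitone f := by
  intro a b hab x y hx hy
  rw [← hfg b x hx, ← hfg a y hy]
  exact hg hab

variable [ConditionallyCompleteLattice β] {f : α → Option β}

theorem PartialAntitone.exists_antitone_extension (hf : PartialAntitone f)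
    (hl : BddBelow {x | ∃ a, f a = some x}) (hu : BddAbove {x | ∃ a, f a = some x}) :
    ∃ g : α → β, Antitone g ∧ ∀ a x, f a = some x → g a = x := by
  obtain ⟨m, hm⟩ := hl
  -- `m` serves as the value at points with no defined value above them.
  let valuesAbove (a : α) : Set β := insert m {x | ∃ b, a ≤ b ∧ f b = some x}
  have valuesAbove_bddAbove (a : α) : BddAbove (valuesAbove a) := by
    refine .insert m (hu.mono ?_)
    rintro x ⟨b, _, hx⟩
    exact ⟨b, hx⟩
  have valuesAbove_antitone : Antitone valuesAbove := fun _ _ hab =>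
    Set.insert_subset_insert fun _ ⟨c, hbc, hx⟩ => ⟨c, hab.trans hbc, hx⟩
  refine ⟨fun a => sSup (valuesAbove a), fun a b hab => ?_, fun a x hx => ?_⟩
  · exact csSup_le_csSup (valuesAbove_bddAbove a) (Set.insert_nonempty _ _)
      (valuesAbove_antitone hab)
  · have isGreatest : IsGreatest (valuesAbove a) x := by
      refine ⟨.inr ⟨a, le_rfl, hx⟩, ?_⟩
      rintro y (rfl | ⟨b, hab, hy⟩)
      · exact hm ⟨a, hx⟩
      · exact hf hab hy hx
    exact isGreatest.csSup_eq

theorem partialAntitone_iff_exists_antitone_extension [Finite α] :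
    PartialAntitone f ↔ ∃ g : α → β, Antitone g ∧ ∀ a x, f a = some x → g a = x := by
  have : Nonempty β := ⟨sSup ∅⟩
  have values_finite : {x | ∃ a, f a = some x}.Finite :=
    (Set.finite_range f).preimage (f := some) (Option.some_injective β).injOn
  exact ⟨fun hf => hf.exists_antitone_extension values_finite.bddBelow values_finite.bddAbove,
    fun ⟨_, hg, hfg⟩ => .of_antitone_extension hg hfg⟩

end PartialAntitone

section Intervals

variable {α β : Type*}

/-- The upper triangle of a matrix, as a function on the nonempty intervals `[i, j]` of indices. -/
def upperTriangle [LE α] (M : α → α → β) (I : NonemptyInterval α) : β :=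
  M I.fst I.snd

/-- The symmetric matrix with a given upper triangle: its `(i, j)` entry is the value at the
interval hull of `{i, j}`. -/
def symmetricOfUpperTriangle [Lattice α] (g : NonemptyInterval α → β) (i j : α) : β :=
  g (.pure i ⊔ .pure j)

theorem symmetricOfUpperTriangle_comm [Lattice α] (g : NonemptyInterval α → β) (i j : α) :
    symmetricOfUpperTriangle g j i = symmetricOfUpperTriangle g i j :=
  congrArg g (sup_comm _ _)

theorem symmetricOfUpperTriangle_of_le [Lattice α] (g : NonemptyInterval α → β) {i j : α}
    (h : i ≤ j) : symmetricOfUpperTriangle g i j = g ⟨(i, j), h⟩ :=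
  congrArg g (NonemptyInterval.ext (Prod.ext (inf_eq_left.2 h) (sup_eq_right.2 h)))

theorem upperTriangle_symmetricOfUpperTriangle [Lattice α] (g : NonemptyInterval α → β) :
    upperTriangle (symmetricOfUpperTriangle g) = g :=
  funext fun I => symmetricOfUpperTriangle_of_le g I.fst_le_snd

instance [LE α] [Finite α] : Finite (NonemptyInterval α) :=
  .of_injective _ NonemptyInterval.toProd_injective

end Intervals

section Robinson

variable {n : ℕ} {A : Fin n → Fin n → Option ℝ} {B : Fin n → Fin n → ℝ}

theorem isStrongRobinsonOpt_iff_partialAntitone :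
    IsStrongRobinsonOpt A ↔ PartialAntitone (upperTriangle A) :=
  ⟨fun h I J hIJ => h J.fst I.fst I.snd J.snd hIJ.1 I.fst_le_snd hIJ.2,
    fun h i k l j hik hkl hlj =>
      @h ⟨(k, l), hkl⟩ ⟨(i, j), hik.trans (hkl.trans hlj)⟩ ⟨hik, hlj⟩⟩

theorem isRobinson_iff_antitone : IsRobinson B ↔ Antitone (upperTriangle B) := by
  constructor
  · rintro ⟨row, column⟩ I J hIJ
    calc B J.fst J.snd
      _ ≤ B J.fst I.snd := row _ _ _ (hIJ.1.trans I.fst_le_snd) hIJ.2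
      _ ≤ B I.fst I.snd := column _ _ _ hIJ.1 I.fst_le_snd
  · exact fun h =>
      ⟨fun i k j hik hkj => @h ⟨(i, k), hik⟩ ⟨(i, j), hik.trans hkj⟩ ⟨le_rfl, hkj⟩,
        fun i l j hil hlj => @h ⟨(l, j), hlj⟩ ⟨(i, j), hil.trans hlj⟩ ⟨hil, le_rfl⟩⟩

theorem IsSymmetricOpt.isCompletion_symmetricOfUpperTriangle (hA : IsSymmetricOpt A)
    {g : NonemptyInterval (Fin n) → ℝ} (hg : ∀ I x, upperTriangle A I = some x → g I = x) :
    IsCompletion A (symmetricOfUpperTriangle g) := by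
  refine ⟨symmetricOfUpperTriangle_comm g, fun i j x hx => ?_⟩
  rcases le_total i j with hij | hji
  · rw [symmetricOfUpperTriangle_of_le g hij]
    exact hg _ x hx
  · rw [symmetricOfUpperTriangle_comm, symmetricOfUpperTriangle_of_le g hji]
    exact hg _ x ((hA i j).trans hx)

theorem IsSymmetricOpt.isStrongRobinsonOpt_iff_exists_isCompletion (hA : IsSymmetricOpt A) :
    IsStrongRobinsonOpt A ↔ ∃ B, IsCompletion A B ∧ IsRobinson B := by
  rw [isStrongRobinsonOpt_iff_partialAntitone, partialAntitone_iff_exists_antitone_extension]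
  constructor
  · rintro ⟨g, hg, hAg⟩
    refine ⟨_, hA.isCompletion_symmetricOfUpperTriangle hAg, isRobinson_iff_antitone.2 ?_⟩
    rwa [upperTriangle_symmetricOfUpperTriangle]
  · rintro ⟨B, ⟨_, hAB⟩, hB⟩
    exact ⟨upperTriangle B, isRobinson_iff_antitone.1 hB, fun _ => hAB _ _⟩

theorem isCompletion_reindex_iff (π : Equiv.Perm (Fin n)) :
    IsCompletion (fun i j => A (π i) (π j)) (fun i j => B (π i) (π j)) ↔ IsCompletion A B :=
  and_congr (π.surjective.forall₂ (p := fun i j => B j i = B i j)).symm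
    (π.surjective.forall₂ (p := fun i j => ∀ x, A i j = some x → B i j = x)).symm

theorem exists_reindex_iff {ι β : Type*} (π : Equiv.Perm ι) {P : (ι → ι → β) → Prop} :
    (∃ M : ι → ι → β, P fun i j => M (π i) (π j)) ↔ ∃ M, P M :=
  (π.symm.arrowCongr (π.symm.arrowCongr (Equiv.refl β))).exists_congr_right

end Robinson

/-- An incomplete symmetric matrix is Strong-Robinsonian iff it has a Robinsonian completion. -/
theorem stmt0 {n : ℕ} (A : Fin n → Fin n → Option ℝ) (hA : IsSymmetricOpt A) :
    IsStrongRobinsonianOpt A ↔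
      ∃ B : Fin n → Fin n → ℝ, IsCompletion A B ∧ IsRobinsonian B := by
  calc IsStrongRobinsonianOpt A
    _ ↔ ∃ π : Equiv.Perm (Fin n), ∃ B,
          IsCompletion (fun i j => A (π i) (π j)) B ∧ IsRobinson B :=
      exists_congr fun π =>
        IsSymmetricOpt.isStrongRobinsonOpt_iff_exists_isCompletion fun i j => hA (π i) (π j)
    _ ↔ ∃ π : Equiv.Perm (Fin n), ∃ B : Fin n → Fin n → ℝ,
          IsCompletion A B ∧ IsRobinson fun i j => B (π i) (π j) :=
      exists_congr fun π => by
        rw [← exists_reindex_iff π]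
        simp only [isCompletion_reindex_iff]
    _ ↔ ∃ B : Fin n → Fin n → ℝ, IsCompletion A B ∧ IsRobinsonian B := by
      rw [exists_comm]
      simp only [exists_and_left, IsRobinsonian]
end

section
/- There exists an incomplete symmetric matrix that is Robinsonian but is not Strong-Robinsonian. -/
/-!
In a Robinson ordering, the pair carrying the strictly smallest of the three entries of a triple is
its outer pair. The matrix below has rows `0, …, 4`, and each of the triples `012`, `123`, `234`
has its strictly smallest entry at its outer pair, so `0, 1, 2, 3, 4` is its only Robinson ordering
up to reversal. In that ordering `a₀₄ = 1` and `a₁₃ = 0` violate the Strong-Robinson condition;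
the Robinson condition does not compare them because `a₀₃` and `a₁₄` are missing.
-/

section

variable {n : ℕ} {A : Fin n → Fin n → Option ℝ}

theorem IsSymmetricOpt.permute (hA : IsSymmetricOpt A) (π : Equiv.Perm (Fin n)) :
    IsSymmetricOpt fun i j => A (π i) (π j) :=
  fun i j => hA (π i) (π j)

theorem IsStrongRobinsonOpt.isRobinsonOpt (hA : IsStrongRobinsonOpt A) : IsRobinsonOpt A :=
  ⟨fun i k j hik hkj => hA i i k j le_rfl hik hkj,
    fun i l j hil hlj => hA i l j j hil hlj le_rfl⟩

theorem IsRobinsonOpt.le_of_mem_uIcc (hA : IsRobinsonOpt A) (hsymm : IsSymmetricOpt A)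
    {i j k : Fin n} {x y : ℝ} (hk : k ∈ Set.uIcc i j) (hij : A i j = some x)
    (hik : A i k = some y) : x ≤ y := by
  obtain ⟨h₁, h₂⟩ | ⟨h₁, h₂⟩ := Set.mem_uIcc.1 hk
  · exact hA.1 i k j h₁ h₂ x y hij hik
  · exact hA.2 j k i h₁ h₂ x y ((hsymm i j).trans hij) ((hsymm i k).trans hik)

theorem IsRobinsonOpt.between_of_lt_of_lt (hA : IsRobinsonOpt A) (hsymm : IsSymmetricOpt A)
    {i j k : Fin n} {x y z : ℝ} (hij : A i j = some x) (hjk : A j k = some y)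
    (hik : A i k = some z) (hzx : z < x) (hzy : z < y) :
    (i < j ∧ j < k) ∨ (k < j ∧ j < i) := by
  have hk : k ∉ Set.uIcc i j := fun hk => hzx.not_ge (hA.le_of_mem_uIcc hsymm hk hij hik)
  have hi : i ∉ Set.uIcc k j := fun hi => hzy.not_ge <|
    hA.le_of_mem_uIcc hsymm hi ((hsymm j k).trans hjk) ((hsymm i k).trans hik)
  grind [Set.mem_uIcc]

end

/-- A symmetric incomplete matrix that is Robinson in the given order of its rows, but
Strong-Robinson in no order; `none` marks a missing entry. -/
noncomputable def robinsonExample : Fin 5 → Fin 5 → Option ℝ :=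
  ![![some 2, some 2, some 1, none, some 1],
    ![some 2, some 2, some 2, some 0, none],
    ![some 1, some 2, some 2, some 2, some 1],
    ![none, some 0, some 2, some 2, some 2],
    ![some 1, none, some 1, some 2, some 2]]

theorem isSymmetricOpt_robinsonExample : IsSymmetricOpt robinsonExample := by
  intro i j
  fin_cases i <;> fin_cases j <;> rfl

theorem isRobinsonOpt_robinsonExample : IsRobinsonOpt robinsonExample := by
  constructor <;> simp [Fin.forall_fin_succ, robinsonExample]

theorem strictMono_or_strictAnti_of_isRobinsonOpt_robinsonExample {π : Equiv.Perm (Fin 5)}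
    (hπ : IsRobinsonOpt fun i j => robinsonExample (π i) (π j)) :
    StrictMono π.symm ∨ StrictAnti π.symm := by
  have between {i j k : Fin 5} (hij : robinsonExample i j = some 2)
      (hjk : robinsonExample j k = some 2) {x : ℝ} (hik : robinsonExample i k = some x)
      (hx : x < 2) : (π.symm i < π.symm j ∧ π.symm j < π.symm k) ∨
        (π.symm k < π.symm j ∧ π.symm j < π.symm i) :=
    hπ.between_of_lt_of_lt (isSymmetricOpt_robinsonExample.permute π)
      (by simpa using hij) (by simpa using hjk) (by simpa using hik) hx hx
  have h₀₁₂ := between (i := 0) (j := 1) (k := 2) rfl rfl rfl one_lt_two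
  have h₁₂₃ := between (i := 1) (j := 2) (k := 3) rfl rfl rfl two_pos
  have h₂₃₄ := between (i := 2) (j := 3) (k := 4) rfl rfl rfl one_lt_two
  rw [Fin.strictMono_iff_lt_succ, Fin.strictAnti_iff_succ_lt]
  simp only [Fin.forall_fin_succ]
  grind

theorem not_isStrongRobinsonianOpt_robinsonExample : ¬ IsStrongRobinsonianOpt robinsonExample := by
  rintro ⟨π, hπ⟩
  have one_le_zero : (1 : ℝ) ≤ 0 := by
    obtain hmono | hanti :=
      strictMono_or_strictAnti_of_isRobinsonOpt_robinsonExample hπ.isRobinsonOpt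
    · exact hπ (π.symm 0) (π.symm 1) (π.symm 3) (π.symm 4) (hmono.monotone (by decide))
        (hmono.monotone (by decide)) (hmono.monotone (by decide)) 1 0
        (by simp [robinsonExample]) (by simp [robinsonExample])
    · exact hπ (π.symm 4) (π.symm 3) (π.symm 1) (π.symm 0) (hanti.antitone (by decide))
        (hanti.antitone (by decide)) (hanti.antitone (by decide)) 1 0
        (by simp [robinsonExample]) (by simp [robinsonExample])
  exact one_le_zero.not_gt one_pos

/-- There is an incomplete symmetric matrix that is Robinsonian but not Strong-Robinsonian. -/
theorem stmt2 : ∃ (n : ℕ) (A : Fin n → Fin n → Option ℝ),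
    IsSymmetricOpt A ∧ IsRobinsonianOpt A ∧ ¬ IsStrongRobinsonianOpt A :=
  ⟨5, robinsonExample, isSymmetricOpt_robinsonExample, ⟨1, isRobinsonOpt_robinsonExample⟩,
    not_isStrongRobinsonianOpt_robinsonExample⟩
end

section
/- Every incomplete Strong-Robinson symmetric matrix A with at least one non-missing entry has a Robinson completion all of whose added values belong to w(A); in particular, the completion obtained by setting every missing diagonal entry to max w(A) and then, proceeding by increasing distance j−i from the diagonal, setting each missing entry a_{i,j} with i < j to min(a_{i,j-1}, a_{i+1,j}), is a Robinson matrix. -/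
/-! Replace every missing entry by `M = max w(A)`, giving a full symmetric matrix `g`, and let
`B i j` be the minimum of `g` over the square `[i, j] × [i, j]`. Shrinking the interval shrinks the
square, so `B` is Robinson, and `B` only takes values in `w(A)`. The Strong-Robinson property says
precisely that a known entry is a minimum of `g` over its own square, so `B` agrees with `A` there.
Finally, the square over `[i, j]` consists of the squares over `[i, j - 1]` and `[i + 1, j]`
together with the corners `(i, j)` and `(j, i)`; when the corner entry is missing it carries the
harmless value `M`, which leaves the recursion `B i j = min (B i (j - 1)) (B (i + 1) j)`. -/

section BoxInf

open Finset

/-- The infimum of `g` over the square `[i, j] × [i, j]`, the general source of Robinson matrices.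
The interval is unordered (`uIcc`), so that the result is symmetric in `i` and `j` even when `g`
is not. -/
def boxInf {ι α : Type*} [Lattice ι] [LocallyFiniteOrder ι] [SemilatticeInf α]
    (g : ι → ι → α) (i j : ι) : α :=
  (uIcc i j ×ˢ uIcc i j).inf' (nonempty_uIcc.product nonempty_uIcc) fun p => g p.1 p.2

section Lattice

variable {ι α : Type*} [Lattice ι] [LocallyFiniteOrder ι]

theorem exists_boxInf_eq [LinearOrder α] (g : ι → ι → α) (i j : ι) :
    ∃ k l, boxInf g i j = g k l := by
  obtain ⟨⟨k, l⟩, -, h⟩ := exists_mem_eq_inf' (nonempty_uIcc.product nonempty_uIcc)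
    fun p : ι × ι => g p.1 p.2
  exact ⟨k, l, h⟩

variable [SemilatticeInf α]

theorem boxInf_comm (g : ι → ι → α) (i j : ι) : boxInf g j i = boxInf g i j := by
  simp only [boxInf, uIcc_comm j i]

theorem boxInf_self (g : ι → ι → α) (i : ι) : boxInf g i i = g i i := by
  simp [boxInf]

variable {g : ι → ι → α} {i j k l : ι} {c : α}

theorem le_boxInf_iff : c ≤ boxInf g i j ↔ ∀ k ∈ uIcc i j, ∀ l ∈ uIcc i j, c ≤ g k l := by
  simp only [boxInf, le_inf'_iff, mem_product, Prod.forall, and_imp]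
  exact forall_congr' fun _ => forall_comm

theorem boxInf_le (hk : k ∈ uIcc i j) (hl : l ∈ uIcc i j) : boxInf g i j ≤ g k l :=
  le_boxInf_iff.1 le_rfl k hk l hl

theorem boxInf_le_boxInf (hik : i ≤ k) (hkl : k ≤ l) (hlj : l ≤ j) :
    boxInf g i j ≤ boxInf g k l := by
  have hsub : uIcc k l ⊆ uIcc i j :=
    uIcc_subset_uIcc (mem_uIcc_of_le hik (hkl.trans hlj)) (mem_uIcc_of_le (hik.trans hkl) hlj)
  exact le_boxInf_iff.2 fun _ hp _ hq => boxInf_le (hsub hp) (hsub hq)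

end Lattice

section LinearOrder

variable {ι α : Type*} [LinearOrder ι] [LocallyFiniteOrder ι] [SemilatticeInf α]
  {g : ι → ι → α} {i i' j j' : ι} {c : α}

theorem le_boxInf_iff_of_symm (hg : ∀ k l, g l k = g k l) (hij : i ≤ j) :
    c ≤ boxInf g i j ↔ ∀ k l, i ≤ k → k ≤ l → l ≤ j → c ≤ g k l := by
  simp only [le_boxInf_iff, uIcc_of_le hij, mem_Icc]
  refine ⟨fun h k l hik hkl hlj => h k ⟨hik, hkl.trans hlj⟩ l ⟨hik.trans hkl, hlj⟩,
    fun h k hk l hl => ?_⟩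
  rcases le_total k l with hkl | hlk
  · exact h k l hk.1 hkl hl.2
  · exact hg l k ▸ h l k hl.1 hlk hk.2

theorem boxInf_eq_inf_of_covBy (hg : ∀ k l, g l k = g k l) (hij : i < j) (hi : i ⋖ i')
    (hj : j' ⋖ j) : boxInf g i j = g i j ⊓ (boxInf g i j' ⊓ boxInf g i' j) := by
  have hij' : i ≤ j' := hj.le_of_lt hij
  have hi'j : i' ≤ j := hi.ge_of_gt hij
  apply le_antisymm
  · exact le_inf (boxInf_le left_mem_uIcc right_mem_uIcc)
      (le_inf (boxInf_le_boxInf le_rfl hij' hj.le) (boxInf_le_boxInf hi.le hi'j le_rfl))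
  refine (le_boxInf_iff_of_symm hg hij.le).2 fun k l hik hkl hlj => ?_
  rcases hlj.eq_or_lt with rfl | hlj
  · rcases hik.eq_or_lt with rfl | hik
    · exact inf_le_left
    · exact (inf_le_right.trans inf_le_right).trans <|
        (le_boxInf_iff_of_symm hg hi'j).1 le_rfl k l (hi.ge_of_gt hik) hkl le_rfl
  · exact (inf_le_right.trans inf_le_left).trans <|
      (le_boxInf_iff_of_symm hg hij').1 le_rfl k l hik hkl (hj.le_of_lt hlj)

end LinearOrder

end BoxInf

section Completion

variable {ι α : Type*}

/-- The set `w(A)` of known entries; this is `valueSet` for arbitrary index and value types. -/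
def entrySet (A : ι → ι → Option α) : Set α :=
  {x | ∃ i j, A i j = some x}

theorem finite_entrySet [Finite ι] (A : ι → ι → Option α) : (entrySet A).Finite := by
  refine ((Set.finite_range (Function.uncurry A)).preimage
    (Option.some_injective α).injOn).subset ?_
  rintro x ⟨i, j, h⟩
  exact ⟨(i, j), h⟩

/-- The completion of `A` obtained by filling each missing entry with `M` and then taking minima
over squares. With `M = max w(A)` it solves the recursion `B i j = min (B i (j - 1)) (B (i + 1) j)`
at missing entries in closed form. -/
def robinsonCompletion [Lattice ι] [LocallyFiniteOrder ι] [SemilatticeInf α]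
    (A : ι → ι → Option α) (M : α) : ι → ι → α :=
  boxInf fun k l => (A k l).getD M

variable {A : ι → ι → Option α} {M : α}

theorem robinsonCompletion_mem [Lattice ι] [LocallyFiniteOrder ι] [LinearOrder α]
    (hM : M ∈ entrySet A) (i j : ι) : robinsonCompletion A M i j ∈ entrySet A := by
  obtain ⟨k, l, h⟩ := exists_boxInf_eq (fun k l => (A k l).getD M) i j
  rw [robinsonCompletion, h]
  cases hkl : A k l with
  | none => exact hM
  | some y => exact ⟨k, l, hkl⟩

variable [LinearOrder ι] [LocallyFiniteOrder ι]

theorem robinsonCompletion_eq [SemilatticeInf α] (hsymm : ∀ i j, A j i = A i j)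
    (hstrong : ∀ i k l j, i ≤ k → k ≤ l → l ≤ j →
      ∀ x y, A i j = some x → A k l = some y → x ≤ y)
    (hM : M ∈ upperBounds (entrySet A)) {i j : ι} {x : α} (hx : A i j = some x) :
    robinsonCompletion A M i j = x := by
  wlog hij : i ≤ j generalizing i j
  · exact (boxInf_comm _ j i).trans (this ((hsymm i j).trans hx) (le_of_not_ge hij))
  apply le_antisymm
  · calc robinsonCompletion A M i j
        ≤ (A i j).getD M := boxInf_le Finset.left_mem_uIcc Finset.right_mem_uIcc
      _ = x := by rw [hx, Option.getD_some]
  · have hfill : ∀ k l, (A l k).getD M = (A k l).getD M := fun k l => by rw [hsymm k l]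
    refine (le_boxInf_iff_of_symm hfill hij).2 fun k l hik hkl hlj => ?_
    cases hy : A k l with
    | none => exact hM ⟨i, j, hx⟩
    | some y => exact hstrong i k l j hik hkl hlj x y hx hy

variable [LinearOrder α]

theorem robinsonCompletion_eq_min (hsymm : ∀ i j, A j i = A i j)
    (hM : IsGreatest (entrySet A) M) {i i' j j' : ι} (hij : i < j)
    (hi : i ⋖ i') (hj : j' ⋖ j) (hnone : A i j = none) :
    robinsonCompletion A M i j =
      min (robinsonCompletion A M i j') (robinsonCompletion A M i' j) := by
  have hfill : ∀ k l, (A l k).getD M = (A k l).getD M := fun k l => by rw [hsymm k l]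
  have hle : min (robinsonCompletion A M i j') (robinsonCompletion A M i' j) ≤ M :=
    (min_le_left _ _).trans (hM.2 (robinsonCompletion_mem hM.1 i j'))
  calc robinsonCompletion A M i j
      = min ((A i j).getD M) (min (robinsonCompletion A M i j') (robinsonCompletion A M i' j)) :=
        boxInf_eq_inf_of_covBy hfill hij hi hj
    _ = min M (min (robinsonCompletion A M i j') (robinsonCompletion A M i' j)) := by
        rw [hnone, Option.getD_none]
    _ = min (robinsonCompletion A M i j') (robinsonCompletion A M i' j) := min_eq_right hle

theorem stmt7_general (A : ι → ι → Option α) (hsymm : ∀ i j, A j i = A i j)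
    (hstrong : ∀ i k l j, i ≤ k → k ≤ l → l ≤ j →
      ∀ x y, A i j = some x → A k l = some y → x ≤ y)
    {M : α} (hM : IsGreatest (entrySet A) M) :
    ∃ B : ι → ι → α,
      ((∀ i j, B j i = B i j) ∧ ∀ i j x, A i j = some x → B i j = x) ∧
      (∀ i j, B i j ∈ entrySet A) ∧
      (∀ i k l j, i ≤ k → k ≤ l → l ≤ j → B i j ≤ B k l) ∧
      (∀ i, A i i = none → B i i = M) ∧
      (∀ i i' j' j, i < j → i ⋖ i' → j' ⋖ j → A i j = none →
        B i j = min (B i j') (B i' j)) := by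
  refine ⟨robinsonCompletion A M, ⟨boxInf_comm _, fun i j x => ?_⟩, ?_, ?_, fun i hi => ?_, ?_⟩
  · exact robinsonCompletion_eq hsymm hstrong hM.2
  · exact robinsonCompletion_mem hM.1
  · exact fun i k l j => boxInf_le_boxInf
  · simp only [robinsonCompletion, boxInf_self, hi, Option.getD_none]
  · exact fun i i' j' j => robinsonCompletion_eq_min hsymm hM

end Completion

theorem isGreatest_sSup_valueSet {n : ℕ} {A : Fin n → Fin n → Option ℝ}
    (hne : (valueSet A).Nonempty) : IsGreatest (valueSet A) (sSup (valueSet A)) :=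
  have hfin : (valueSet A).Finite := finite_entrySet A
  ⟨hne.csSup_mem hfin, fun _ hx => le_csSup hfin.bddAbove hx⟩

theorem isRobinson_of_forall_le {n : ℕ} {B : Fin n → Fin n → ℝ}
    (hB : ∀ i k l j, i ≤ k → k ≤ l → l ≤ j → B i j ≤ B k l) : IsRobinson B :=
  ⟨fun i k j hik hkj => hB i i k j le_rfl hik hkj, fun i l j hil hlj => hB i l j j hil hlj le_rfl⟩

/-- Every incomplete Strong-Robinson symmetric matrix with at least one non-missing entry
has a Robinson completion in `w(A)`; in particular the completion filling missing diagonal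
entries with `max w(A)` and, moving away from the diagonal, each missing `a_{i,j}` (`i < j`)
with `min (a_{i,j-1}, a_{i+1,j})`, is Robinson. -/
theorem stmt7 {n : ℕ} (A : Fin n → Fin n → Option ℝ) (hAsym : IsSymmetricOpt A)
    (hSR : IsStrongRobinsonOpt A) (hne : ∃ i j x, A i j = some x) :
    ∃ B : Fin n → Fin n → ℝ,
      IsCompletion A B ∧
      (∀ i j, A i j = none → B i j ∈ valueSet A) ∧
      IsRobinson B ∧
      (∀ i, A i i = none → B i i = sSup (valueSet A)) ∧
      (∀ (i j : Fin n) (h : i < j), A i j = none →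
        B i j = min (B i ⟨j.val - 1, Nat.lt_of_le_of_lt (Nat.sub_le _ _) j.isLt⟩)
                    (B ⟨i.val + 1, Nat.lt_of_le_of_lt h j.isLt⟩ j)) := by
  obtain ⟨i₀, j₀, x₀, hx₀⟩ := hne
  obtain ⟨B, hcompl, hmem, hmono, hdiag, hmin⟩ :=
    stmt7_general A hAsym hSR (isGreatest_sSup_valueSet ⟨x₀, i₀, j₀, hx₀⟩)
  refine ⟨B, hcompl, fun i j _ => hmem i j, isRobinson_of_forall_le hmono, hdiag,
    fun i j h => hmin i _ _ j h ?_ ?_⟩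
  · simp
  · simp only [Fin.covBy_iff, Nat.covBy_iff_add_one_eq]
    omega
end

section
/- The incomplete symmetric 6×6 matrix A with rows (1,1,0,0,0,0), (1,1,1,*,1,0), (0,1,1,0,*,0), (0,*,0,1,1,0), (0,1,*,1,1,1), (0,0,0,0,1,1), where * denotes a missing entry, is not Strong-Robinsonian: no permutation π of {1,…,6} makes the matrix with entries a_{π(i),π(j)} Strong-Robinson. -/
/-- The incomplete symmetric 6×6 matrix from the paper (`none` denotes a missing entry). -/
def Aex : Fin 6 → Fin 6 → Option ℝ :=
  ![![some 1, some 1, some 0, some 0, some 0, some 0],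
    ![some 1, some 1, some 1, none,   some 1, some 0],
    ![some 0, some 1, some 1, some 0, none,   some 0],
    ![some 0, none,   some 0, some 1, some 1, some 0],
    ![some 0, some 1, none,   some 1, some 1, some 1],
    ![some 0, some 0, some 0, some 0, some 1, some 1]]

/-!
Place the indices `0, …, 5` on a line in the order that sorts the matrix. A pair with entry `1` can
then never enclose a pair with entry `0`. If `a u v` and `a u w` are `1` and `a v w` is `0`, this
forces `u` to lie strictly between `v` and `w`. Up to reversing the line, `1` precedes `4`, so `0`,
`1`, `4`, `5` occur in this order, `2` lies to the right of `1`, and `3` to the left of `4`. If `2`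
were not to the left of `4`, then, according to its position relative to `5`, the pair `1, 2` would
enclose `1, 5` or the pair `4, 5` would enclose `2, 5`; symmetrically, `3` lies to the right of `1`.
Hence the pair `1, 4`, with entry `1`, encloses the pair `2, 3`, with entry `0`.
-/

/-- Strict comparison of two matrix entries, both of which are required to be non-missing. -/
def SomeLT {V : Type*} [LT V] (s t : Option V) : Prop :=
  ∃ x ∈ s, ∃ y ∈ t, x < y

/-- The partial matrix `A` is Strong-Robinson when its indices are placed at the positions `p` of an
ordered set. The entries are compared through `¬ <`, and distinct indices may share a position. -/
def IsStrongRobinsonAlong {ι V α : Type*} [LT V] [LE α] (A : ι → ι → Option V) (p : ι → α) : Prop :=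
  ∀ ⦃i k l j : ι⦄, p i ≤ p k → p k ≤ p l → p l ≤ p j → ¬ SomeLT (A k l) (A i j)

theorem isStrongRobinsonAlong_symm_iff {n : ℕ} {A : Fin n → Fin n → Option ℝ}
    {π : Equiv.Perm (Fin n)} :
    IsStrongRobinsonAlong A π.symm ↔ IsStrongRobinsonOpt (fun i j => A (π i) (π j)) := by
  constructor
  · intro h i k l j hik hkl hlj x y hx hy
    refine le_of_not_gt fun hyx => h (i := π i) (k := π k) (l := π l) (j := π j) ?_ ?_ ?_
      ⟨y, hy, x, hx, hyx⟩
    all_goals simpa only [Equiv.symm_apply_apply]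
  · rintro h i k l j hik hkl hlj ⟨y, hy, x, hx, hyx⟩
    refine hyx.not_ge (h _ _ _ _ hik hkl hlj x y ?_ ?_)
    all_goals simpa only [Equiv.apply_symm_apply]

namespace IsStrongRobinsonAlong

variable {ι V α : Type*} [LT V] {A : ι → ι → Option V} {p : ι → α} {u v w x : ι}

theorem toDual [LE α] (h : IsStrongRobinsonAlong A p) (hA : ∀ i j, A j i = A i j) :
    IsStrongRobinsonAlong A (OrderDual.toDual ∘ p) := by
  intro i k l j hik hkl hlj hlt
  rw [← hA k l, ← hA i j] at hlt
  exact h hlj hkl hik hlt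

variable [LinearOrder α]

theorem lt_of_le_of_someLT (h : IsStrongRobinsonAlong A p) (hA : ∀ i j, A j i = A i j)
    (hwu : p w ≤ p u) (hv : SomeLT (A v w) (A u v)) (hw : SomeLT (A v w) (A u w)) :
    p u < p v := by
  by_contra! hvu
  rcases le_total (p v) (p w) with hvw | hwv
  · exact h le_rfl hvw hwu (hA u v ▸ hv)
  · exact h le_rfl hwv hvu (hA v w ▸ hA u w ▸ hw)

theorem gt_of_ge_of_someLT (h : IsStrongRobinsonAlong A p) (hA : ∀ i j, A j i = A i j)
    (huw : p u ≤ p w) (hv : SomeLT (A v w) (A u v)) (hw : SomeLT (A v w) (A u w)) :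
    p v < p u :=
  (h.toDual hA).lt_of_le_of_someLT hA huw hv hw

theorem lt_of_someLT_of_someLT (h : IsStrongRobinsonAlong A p) (hux : p u ≤ p x)
    (huv : SomeLT (A u x) (A u v)) (hwx : SomeLT (A v x) (A w x)) : p v < p w := by
  by_contra! hwv
  rcases le_total (p v) (p x) with hvx | hxv
  · exact h hwv hvx le_rfl hwx
  · exact h le_rfl hux hxv huv

end IsStrongRobinsonAlong

theorem isSymmetricOpt_Aex : IsSymmetricOpt Aex := by
  intro i j
  fin_cases i <;> fin_cases j <;> rfl

theorem stmt9_general {α : Type*} [LinearOrder α] (p : Fin 6 → α) :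
    ¬ IsStrongRobinsonAlong Aex p := by
  intro h
  have symm := isSymmetricOpt_Aex
  have zero_lt : SomeLT (some (0 : ℝ)) (some 1) := ⟨0, rfl, 1, rfl, one_pos⟩
  wlog h14 : p 1 ≤ p 4 generalizing α
  · exact this (OrderDual.toDual ∘ p) (h.toDual symm) (le_of_not_ge h14)
  have h01 : p 0 < p 1 := h.gt_of_ge_of_someLT symm h14 zero_lt zero_lt
  have h45 : p 4 < p 5 := h.lt_of_le_of_someLT symm h14 zero_lt zero_lt
  have h12 : p 1 < p 2 := h.lt_of_le_of_someLT symm h01.le zero_lt zero_lt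
  have h34 : p 3 < p 4 := h.gt_of_ge_of_someLT symm h45.le zero_lt zero_lt
  have h24 : p 2 < p 4 := h.lt_of_someLT_of_someLT (h14.trans h45.le) zero_lt zero_lt
  have h13 : p 1 < p 3 :=
    (h.toDual symm).lt_of_someLT_of_someLT (h01.le.trans h14) zero_lt zero_lt
  rcases le_total (p 2) (p 3) with h23 | h32
  · exact h h12.le h23 h34.le zero_lt
  · exact h h13.le h32 h24.le zero_lt

/-- The matrix `Aex` is not Strong-Robinsonian. -/
theorem stmt9 : ¬ IsStrongRobinsonianOpt Aex := by
  rintro ⟨π, h⟩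
  exact stmt9_general π.symm (isStrongRobinsonAlong_symm_iff.mpr h)
end
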